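/- arXiv:2010.14686 — 2 statements merged into one kernel-verified Lean document; each statement's English description precedes it below -/
import Mathlib

section
/- Let β > 1 be a non-integral real number whose beta-expansion b(β) is not eventually periodic, and suppose the generating set G_β of the two-sided Beta-shift X̂_β contains no infinite chains of generators. Then every f-invariant Borel probability measure μ on X̂_β satisfies μ(X̂_β \ X̂_{β,seq}) = 0, where X̂_{β,seq} is the set of bi-infinite concatenations of words of G_β. -/
open Filter MeasureTheory Topology
open scoped BigOperators ENNReal

noncomputable section

namespace PaperStmt

/-- The full two-sided shift: bi-infinite sequences over the alphabet `Fin d`. -/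
abbrev FullShift (d : ℕ) := ℤ → Fin d

/-- The (left) shift map `f(x)_k = x_{k+1}`. -/
def shift (d : ℕ) : FullShift d → FullShift d := fun x k => x (k + 1)

/-- A (two-sided) shift space: a nonempty closed shift-invariant subset. -/
def IsShiftSpace {d : ℕ} (X : Set (FullShift d)) : Prop :=
  X.Nonempty ∧ IsClosed X ∧ shift d '' X = X

/-- The cylinder at position `0` determined by a word `w` of length `n`. -/
def cyl {d n : ℕ} (w : Fin n → Fin d) : Set (FullShift d) :=
  {x | ∀ i : Fin n, x ((i : ℕ) : ℤ) = w i}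

/-- The language of `X` in length `n`: words of length `n` occurring in elements of `X`
(at position `0`; for shift-invariant `X` this is occurrence anywhere). -/
def langSet {d : ℕ} (X : Set (FullShift d)) (n : ℕ) : Set (Fin n → Fin d) :=
  {w | (X ∩ cyl w).Nonempty}

/-- Birkhoff sum `S_n φ`. -/
def birkhoff {d : ℕ} (φ : FullShift d → ℝ) (n : ℕ) (x : FullShift d) : ℝ :=
  ∑ k ∈ Finset.range n, φ ((shift d)^[k] x)

open Classical in
/-- The `n`-th partition function `Z_n(φ)` of `X`. -/
def Zfun {d : ℕ} (X : Set (FullShift d)) (φ : FullShift d → ℝ) (n : ℕ) : ℝ :=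
  ∑ w : Fin n → Fin d,
    if (X ∩ cyl w).Nonempty then Real.exp (sSup (birkhoff φ n '' (X ∩ cyl w))) else 0

/-- Topological pressure `P_top(X,φ) = lim (1/n) log Z_n(φ) = inf_n (1/n) log Z_n(φ)`. -/
def pressure {d : ℕ} (X : Set (FullShift d)) (φ : FullShift d → ℝ) : ℝ :=
  ⨅ n : ℕ, (1 / (n + 1 : ℝ)) * Real.log (Zfun X φ (n + 1))

/-- Topological entropy `h_top(X) = inf_n (1/n) log |L(X,n)|`. -/
def entTop {d : ℕ} (X : Set (FullShift d)) : ℝ :=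
  ⨅ n : ℕ, (1 / (n + 1 : ℝ)) * Real.log ((langSet X (n + 1)).ncard : ℝ)

/-- The shift-invariant Borel probability measures giving `X` full measure. -/
def InvProb {d : ℕ} (X : Set (FullShift d)) : Set (Measure (FullShift d)) :=
  {μ | IsProbabilityMeasure μ ∧ μ.map (shift d) = μ ∧ μ X = 1}

/-- Measure-theoretic (Kolmogorov–Sinai) entropy of an invariant measure,
computed via cylinder sets: `h_μ = lim -(1/n) Σ_{|w|=n} μ[w] log μ[w]`. -/
def mEnt {d : ℕ} (μ : Measure (FullShift d)) : ℝ :=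
  Filter.liminf
    (fun n : ℕ => (1 / (n + 1 : ℝ)) *
      ∑ w : Fin (n + 1) → Fin d, Real.negMulLog (μ (cyl w)).toReal)
    Filter.atTop

/-- The free energy `h_μ(f) + ∫ φ dμ` of an invariant measure. -/
def freeEnergy {d : ℕ} (μ : Measure (FullShift d)) (φ : FullShift d → ℝ) : ℝ :=
  mEnt μ + ∫ x, φ x ∂μ

/-- `sup { ∫ φ dμ : μ ∈ M_X }`. -/
def intAvg {d : ℕ} (X : Set (FullShift d)) (φ : FullShift d → ℝ) : ℝ :=
  sSup {r | ∃ μ ∈ InvProb X, r = ∫ x, φ x ∂μ}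

/-- `μ` is an equilibrium state of `φ` on `X`. -/
def IsEqState {d : ℕ} (X : Set (FullShift d)) (φ : FullShift d → ℝ)
    (μ : Measure (FullShift d)) : Prop :=
  μ ∈ InvProb X ∧ freeEnergy μ φ = pressure X φ

/-- `p : ℤ → ℤ` parses `x` into consecutive generator blocks from `𝒢`:
the block of `x` from `p j` to `p (j+1) - 1` is a generator, for every `j`. -/
def IsParsing {d : ℕ} (𝒢 : Set (List (Fin d))) (x : FullShift d) (p : ℤ → ℤ) : Prop :=
  StrictMono p ∧ ∀ j : ℤ, ∃ g ∈ 𝒢,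
    p (j + 1) = p j + g.length ∧ ∀ (l : ℕ) (hl : l < g.length), x (p j + l) = g[l]

/-- `X_seq`: the set of bi-infinite concatenations of generators. -/
def Xseq {d : ℕ} (𝒢 : Set (List (Fin d))) : Set (FullShift d) :=
  {x | ∃ p : ℤ → ℤ, IsParsing 𝒢 x p}

/-- The coded shift generated by `𝒢`: the closure of `X_seq`. -/
def codedShift {d : ℕ} (𝒢 : Set (List (Fin d))) : Set (FullShift d) :=
  closure (Xseq 𝒢)

/-- `𝒢` is a unique representation: every `x ∈ X_seq` admits exactly one parsing
into generator blocks (i.e. the set of cut points is uniquely determined). -/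
def UniqueRep {d : ℕ} (𝒢 : Set (List (Fin d))) : Prop :=
  ∀ (x : FullShift d) (p q : ℤ → ℤ),
    IsParsing 𝒢 x p → IsParsing 𝒢 x q → Set.range p = Set.range q

/-- `P_seq(φ) = sup { h_μ + ∫φ dμ : μ ∈ M_X, μ(Xs) = 1 }`. -/
def PseqOf {d : ℕ} (X Xs : Set (FullShift d)) (φ : FullShift d → ℝ) : ℝ :=
  sSup {r | ∃ μ ∈ InvProb X, μ Xs = 1 ∧ r = freeEnergy μ φ}

/-- `P_lim(φ) = sup { h_μ + ∫φ dμ : μ ∈ M_X, μ(X \ Xs) = 1 }`. -/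
def PlimOf {d : ℕ} (X Xs : Set (FullShift d)) (φ : FullShift d → ℝ) : ℝ :=
  sSup {r | ∃ μ ∈ InvProb X, μ (X \ Xs) = 1 ∧ r = freeEnergy μ φ}

/-- `φ` has strict full sequential pressure: `P_seq(φ) > P_lim(φ)`. -/
def StrictFSP {d : ℕ} (X Xs : Set (FullShift d)) (φ : FullShift d → ℝ) : Prop :=
  PlimOf X Xs φ < PseqOf X Xs φ

/-- `φ ∈ FSSP(X)`: `φ` lies in the sup-norm closure (within `C(X,ℝ)`) of the
set of continuous potentials with strict full sequential pressure. -/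
def InFSSP {d : ℕ} (X Xs : Set (FullShift d)) (φ : FullShift d → ℝ) : Prop :=
  ∀ ε : ℝ, 0 < ε → ∃ ψ : FullShift d → ℝ, ContinuousOn ψ X ∧
    (∀ x ∈ X, |φ x - ψ x| ≤ ε) ∧ StrictFSP X Xs ψ

/-- The invariant probability measure equidistributed on the (period-`ℓ`) orbit of `y`. -/
def periodicMeasure {d : ℕ} (y : FullShift d) (ℓ : ℕ) : Measure (FullShift d) :=
  (ℓ : ℝ≥0∞)⁻¹ • ∑ k ∈ Finset.range ℓ, Measure.dirac ((shift d)^[k] y)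

/-- `y` is periodic with period `ℓ ≥ 1`. -/
def IsPeriodicOf {d : ℕ} (y : FullShift d) (ℓ : ℕ) : Prop :=
  1 ≤ ℓ ∧ (shift d)^[ℓ] y = y


/-- Lexicographic order `c ≼ b` on one-sided sequences. -/
def LexLE {D : ℕ} (c b : ℕ → Fin (D + 1)) : Prop :=
  c = b ∨ ∃ n : ℕ, (∀ m : ℕ, m < n → c m = b m) ∧ c n < b n

/-- The two-sided Beta-shift determined by the expansion `b = b(β)`
(indexed from `0`, so `b j` is the digit `b_{j+1}` of the paper):
all `x` every right tail of which is lexicographically `≤ b(β)`. -/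
def betaShift {D : ℕ} (b : ℕ → Fin (D + 1)) : Set (FullShift (D + 1)) :=
  {x | ∀ n : ℤ, LexLE (fun j : ℕ => x (n + (j : ℕ))) b}

/-- The generating set `G_β = {b_1⋯b_j i : j ≥ 1, i < b_{j+1}} ∪ {i : i < b_1}`
(with `0`-based indexing, `b_1⋯b_j i = b 0 ⋯ b (j−1) i` with `i < b j`; the case
`j = 0` gives the single-letter generators `i < b_1`). -/
def betaGens {D : ℕ} (b : ℕ → Fin (D + 1)) : Set (List (Fin (D + 1))) :=
  {g | ∃ j : ℕ, ∃ i : Fin (D + 1), (i : ℕ) < (b j : ℕ) ∧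
        g = (List.ofFn fun t : Fin j => b (t : ℕ)) ++ [i]}

/-- `b` is eventually periodic. -/
def EventuallyPeriodic {D : ℕ} (b : ℕ → Fin (D + 1)) : Prop :=
  ∃ N p : ℕ, 1 ≤ p ∧ ∀ j : ℕ, N ≤ j → b (j + p) = b j

/-- `b` is the beta-expansion of 1 for `β`: it sums to `1` against `β^{-(j+1)}` and is
the lexicographically largest such sequence. -/
def IsBetaExpansion {D : ℕ} (β : ℝ) (b : ℕ → Fin (D + 1)) : Prop :=
  (∑' j : ℕ, ((b j : ℕ) : ℝ) / β ^ (j + 1)) = 1 ∧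
    ∀ c : ℕ → Fin (D + 1), (∑' j : ℕ, ((c j : ℕ) : ℝ) / β ^ (j + 1)) = 1 → LexLE c b

/-- The forward generator `g_{j,i} = b_1 ⋯ b_j i` (0-based: `b 0 ⋯ b (j−1) i`). -/
def fwdGen {D : ℕ} (b : ℕ → Fin (D + 1)) (j : ℕ) (i : Fin (D + 1)) :
    List (Fin (D + 1)) :=
  (List.ofFn fun t : Fin j => b (t : ℕ)) ++ [i]

/-- `G_β` has an infinite chain of (forward) generators, each appearing as a substring
of the interior `b_2 ⋯ b_{j_{k+1}}` of the next. -/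
def HasInfiniteChain {D : ℕ} (b : ℕ → Fin (D + 1)) : Prop :=
  ∃ j : ℕ → ℕ, ∃ i : ℕ → Fin (D + 1),
    (∀ k : ℕ, 1 ≤ j k ∧ ((i k : ℕ) < (b (j k) : ℕ))) ∧
    ∀ k : ℕ, (fwdGen b (j k) (i k)) <:+:
      (List.ofFn fun t : Fin (j (k + 1) - 1) => b (1 + (t : ℕ)))

/-!
If no tail of a point `x` of the Beta-shift equals `b`, then exactly one generator starts at each
position of `x`. As no tail of `b` exceeds `b`, the blocks of `x` occupied by these generators are
nested or disjoint. Call a position a cut point if no block starting before it reaches it. The block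
starting at a cut point ends right before the next one, so `x` is a concatenation of generators as
soon as it has cut points but no first one. If `x` has no cut point at all, every block lies in the
interior of another one, which yields an infinite chain of generators.

The remaining points of the Beta-shift have a tail equal to `b` or a first cut point. Since `b` is
not periodic, either event singles out one position of `x`, so such points do not recur, and by
Poincaré recurrence they form a null set.
-/

section BetaTransformation

variable {β x y : ℝ}

/-- The β-transformation `x ↦ βx mod 1`, whose orbit of `1` produces the expansion `b(β)`. -/
def betaMap (β x : ℝ) : ℝ := Int.fract (β * x)

/-- The greedy digits of `x` in base `β`, indexed from `0`; they are integers so that their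
recursion holds for every real `x`. -/
def betaDigit (β x : ℝ) (n : ℕ) : ℤ := ⌊β * (betaMap β)^[n] x⌋

lemma betaMap_iterate_succ (β x : ℝ) (n : ℕ) :
    (betaMap β)^[n + 1] x = β * (betaMap β)^[n] x - betaDigit β x n := by
  rw [Function.iterate_succ_apply', betaMap, betaDigit, Int.self_sub_floor]

lemma betaDigit_iterate (β x : ℝ) (d n : ℕ) :
    betaDigit β ((betaMap β)^[d] x) n = betaDigit β x (d + n) := by
  rw [betaDigit, betaDigit, ← Function.iterate_add_apply, add_comm]

lemma betaMap_iterate_mem_Icc (β : ℝ) (hx : x ∈ Set.Icc 0 1) (n : ℕ) :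
    (betaMap β)^[n] x ∈ Set.Icc 0 1 := by
  have hmaps : Set.MapsTo (betaMap β) (Set.Icc 0 1) (Set.Icc 0 1) :=
    fun _ _ => ⟨Int.fract_nonneg _, (Int.fract_lt_one _).le⟩
  exact hmaps.iterate n hx

lemma betaDigit_nonneg (hβ : 0 ≤ β) (hx : x ∈ Set.Icc 0 1) (n : ℕ) : 0 ≤ betaDigit β x n :=
  Int.floor_nonneg.2 (mul_nonneg hβ (betaMap_iterate_mem_Icc β hx n).1)

lemma betaDigit_le_floor (hβ : 0 ≤ β) (hx : x ∈ Set.Icc 0 1) (n : ℕ) : betaDigit β x n ≤ ⌊β⌋ :=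
  Int.floor_le_floor (mul_le_of_le_one_right hβ (betaMap_iterate_mem_Icc β hx n).2)

lemma sum_betaDigit (hβ : β ≠ 0) (x : ℝ) (n : ℕ) :
    ∑ j ∈ Finset.range n, (betaDigit β x j : ℝ) / β ^ (j + 1) =
      x - (betaMap β)^[n] x / β ^ n := by
  induction n with
  | zero => simp
  | succ n ih =>
    rw [Finset.sum_range_succ, ih, betaMap_iterate_succ]
    field_simp
    ring

lemma hasSum_betaDigit (hβ : 1 < β) (hx : x ∈ Set.Icc 0 1) :
    HasSum (fun j : ℕ => (betaDigit β x j : ℝ) / β ^ (j + 1)) x := by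
  have hβ₀ : 0 < β := zero_lt_one.trans hβ
  have hterm (j : ℕ) : 0 ≤ (betaDigit β x j : ℝ) / β ^ (j + 1) :=
    div_nonneg (Int.cast_nonneg (betaDigit_nonneg hβ₀.le hx j)) (by positivity)
  have hrem : Tendsto (fun n : ℕ => (betaMap β)^[n] x / β ^ n) atTop (𝓝 0) := by
    refine squeeze_zero (g := fun n : ℕ => 1 / β ^ n)
      (fun n => div_nonneg (betaMap_iterate_mem_Icc β hx n).1 (by positivity))
      (fun n => by gcongr; exact (betaMap_iterate_mem_Icc β hx n).2) ?_
    exact tendsto_const_nhds.div_atTop (tendsto_pow_atTop_atTop_of_one_lt hβ)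
  rw [hasSum_iff_tendsto_nat_of_nonneg hterm]
  simpa only [sum_betaDigit hβ₀.ne', sub_zero] using hrem.const_sub x

lemma le_betaDigit_of_sum_le (hβ : 0 < β) {c : ℕ → ℤ} {n : ℕ}
    (hc : ∀ j < n, c j = betaDigit β x j)
    (hsum : ∑ j ∈ Finset.range (n + 1), (c j : ℝ) / β ^ (j + 1) ≤ x) :
    c n ≤ betaDigit β x n := by
  have hagree : ∑ j ∈ Finset.range n, (c j : ℝ) / β ^ (j + 1) =
      x - (betaMap β)^[n] x / β ^ n := by
    rw [← sum_betaDigit hβ.ne']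
    exact Finset.sum_congr rfl fun j hj => by rw [hc j (Finset.mem_range.1 hj)]
  rw [Finset.sum_range_succ, hagree] at hsum
  refine Int.le_floor.2 ?_
  have hlast : (c n : ℝ) / β ^ (n + 1) ≤ (betaMap β)^[n] x / β ^ n := by linarith
  rwa [pow_succ', ← div_div, div_le_div_iff_of_pos_right (by positivity), div_le_iff₀' hβ]
    at hlast

lemma betaMap_iterate_le_of_betaDigit_eq (hβ : 0 ≤ β) (hxy : x ≤ y) {n : ℕ}
    (h : ∀ t < n, betaDigit β x t = betaDigit β y t) :
    (betaMap β)^[n] x ≤ (betaMap β)^[n] y := by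
  induction n with
  | zero => exact hxy
  | succ n ih =>
    have := ih fun t ht => h t (ht.trans n.lt_succ_self)
    rw [betaMap_iterate_succ, betaMap_iterate_succ, h n n.lt_succ_self]
    gcongr

lemma betaDigit_le_of_betaDigit_eq (hβ : 0 ≤ β) (hxy : x ≤ y) {n : ℕ}
    (h : ∀ t < n, betaDigit β x t = betaDigit β y t) : betaDigit β x n ≤ betaDigit β y n :=
  Int.floor_le_floor <|
    mul_le_mul_of_nonneg_left (betaMap_iterate_le_of_betaDigit_eq hβ hxy h) hβ

end BetaTransformation

section ShiftMaximal

variable {D : ℕ} {b c : ℕ → Fin (D + 1)}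

lemma lexLE_iff : LexLE c b ↔ ∀ n, (∀ m < n, c m = b m) → c n ≤ b n := by
  constructor
  · rintro (rfl | ⟨k, hk, hlt⟩) n hn
    · exact le_rfl
    · rcases lt_trichotomy n k with h | rfl | h
      · exact (hk n h).le
      · exact hlt.le
      · exact absurd (hn k h) hlt.ne
  · intro h
    by_cases hcb : c = b
    · exact Or.inl hcb
    have hdiff : ∃ n, c n ≠ b n := Function.ne_iff.1 hcb
    have hagree (m : ℕ) (hm : m < Nat.find hdiff) : c m = b m := not_not.1 (Nat.find_min hdiff hm)
    exact Or.inr ⟨Nat.find hdiff, hagree, (h _ hagree).lt_of_ne (Nat.find_spec hdiff)⟩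

/-- Parry's admissibility condition: no tail of `b` exceeds `b` lexicographically. It is the only
property of a β-expansion on which the structure of the Beta-shift depends. -/
def IsShiftMaximal (b : ℕ → Fin (D + 1)) : Prop :=
  ∀ d : ℕ, LexLE (fun j => b (d + j)) b

variable {β : ℝ}

lemma exists_digits_eq_betaDigit (hβ : 1 < β) (hβD : β < D + 1) :
    ∃ c : ℕ → Fin (D + 1), ∀ n, ((c n : ℕ) : ℤ) = betaDigit β 1 n := by
  have hβ₀ : 0 ≤ β := zero_le_one.trans hβ.le
  have hone : (1 : ℝ) ∈ Set.Icc 0 1 := ⟨zero_le_one, le_rfl⟩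
  have hfloor : ⌊β⌋ < D + 1 := Int.floor_lt.2 (by exact_mod_cast hβD)
  have hlt (n : ℕ) : (betaDigit β 1 n).toNat < D + 1 := by
    have := betaDigit_le_floor hβ₀ hone n
    omega
  exact ⟨fun n => ⟨_, hlt n⟩, fun n => Int.toNat_of_nonneg (betaDigit_nonneg hβ₀ hone n)⟩

lemma IsBetaExpansion.eq_betaDigit (hβ : 1 < β) (hβD : β < D + 1) (hb : IsBetaExpansion β b)
    (n : ℕ) : ((b n : ℕ) : ℤ) = betaDigit β 1 n := by
  have hβ₀ : 0 < β := zero_lt_one.trans hβ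
  obtain ⟨c, hc⟩ := exists_digits_eq_betaDigit hβ hβD
  have hcsum : HasSum (fun j => ((c j : ℕ) : ℝ) / β ^ (j + 1)) 1 := by
    simpa only [← hc, Int.cast_natCast] using
      hasSum_betaDigit hβ (x := 1) ⟨zero_le_one, le_rfl⟩
  rcases hb.2 c hcsum.tsum_eq with rfl | ⟨k, hk, hlt⟩
  · exact hc n
  have hbsum : Summable fun j => ((b j : ℕ) : ℝ) / β ^ (j + 1) := by
    by_contra h
    exact zero_ne_one ((tsum_eq_zero_of_not_summable h).symm.trans hb.1)
  have hle : ((b k : ℕ) : ℤ) ≤ betaDigit β 1 k := by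
    refine le_betaDigit_of_sum_le (c := fun j => ((b j : ℕ) : ℤ)) hβ₀
      (fun j hj => by rw [← hk j hj, hc]) ?_
    simpa only [Int.cast_natCast, hb.1] using
      hbsum.sum_le_tsum (Finset.range (k + 1)) fun j _ => by positivity
  rw [← hc, Nat.cast_le] at hle
  exact absurd hlt hle.not_gt

lemma IsBetaExpansion.isShiftMaximal (hβ : 1 < β) (hβD : β < D + 1)
    (hb : IsBetaExpansion β b) : IsShiftMaximal b := by
  have hdigit := hb.eq_betaDigit hβ hβD
  refine fun d => lexLE_iff.2 fun n hn => ?_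
  have hle := betaDigit_le_of_betaDigit_eq (n := n) (zero_le_one.trans hβ.le)
    (betaMap_iterate_mem_Icc β ⟨zero_le_one, le_rfl⟩ d).2 fun t ht => by
      rw [betaDigit_iterate, ← hdigit, ← hdigit, hn t ht]
  rwa [betaDigit_iterate, ← hdigit, ← hdigit, Nat.cast_le] at hle

end ShiftMaximal

section FirstDrop

variable {D : ℕ} {b : ℕ → Fin (D + 1)} {x : FullShift (D + 1)} {k : ℤ → ℕ} {n m q : ℤ}

/-- `k n` is the first index at which the tail of `x` at `n` falls below `b`; equivalently, the
block of `x` from `n` to `n + k n` is a generator. -/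
def IsFirstDrop (b : ℕ → Fin (D + 1)) (x : FullShift (D + 1)) (k : ℤ → ℕ) : Prop :=
  ∀ n : ℤ, (∀ t < k n, x (n + t) = b t) ∧ x (n + k n) < b (k n)

/-- `q` is a cut point of `x`: no prefix of `b` occurs in `x` from a position before `q` up to
`q - 1`. For points of `X̂_{β,seq}` these are the boundaries between consecutive generators. -/
def IsCut (b : ℕ → Fin (D + 1)) (x : FullShift (D + 1)) (q : ℤ) : Prop :=
  ∀ n < q, ∃ t : ℕ, n + t < q ∧ x (n + t) ≠ b t

lemma length_fwdGen (b : ℕ → Fin (D + 1)) (j : ℕ) (i : Fin (D + 1)) :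
    (fwdGen b j i).length = j + 1 := by
  simp [fwdGen]

lemma exists_isFirstDrop (hx : x ∈ betaShift b) (htail : ∀ n : ℤ, (fun t : ℕ => x (n + t)) ≠ b) :
    ∃ k, IsFirstDrop b x k :=
  Classical.skolem.1 fun n => (hx n).resolve_left (htail n)

namespace IsFirstDrop

lemma isCut_iff (hk : IsFirstDrop b x k) : IsCut b x q ↔ ∀ n < q, n + k n < q := by
  refine forall₂_congr fun n _ => ⟨fun ⟨t, htq, hne⟩ => ?_, fun h => ⟨k n, h, (hk n).2.ne⟩⟩
  have : k n ≤ t := not_lt.1 fun ht => hne ((hk n).1 t ht)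
  omega

/-- From `m` to the drop at `n + k n`, the point `x` reads a tail of `b` and then falls below it;
since that tail is at most `b`, the drop below `b` itself has occurred by then. -/
lemma drop_le_drop_of_mem_Icc (hk : IsFirstDrop b x k) (hb : IsShiftMaximal b)
    (hm : m ∈ Set.Icc n (n + k n)) : m + k m ≤ n + k n := by
  by_contra! hlt
  obtain ⟨hnm, hmn⟩ := hm
  obtain ⟨d, rfl⟩ := Int.exists_add_of_le hnm
  obtain ⟨e, he⟩ : ∃ e, k n = d + e := Nat.exists_eq_add_of_le (by omega)
  have hassoc (t : ℕ) : n + d + t = n + (d + t : ℕ) := by push_cast; ring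
  have hagree (t : ℕ) (ht : t < e) : b (d + t) = b t := by
    rw [← (hk n).1 (d + t) (by omega), ← (hk (n + d)).1 t (by omega), hassoc]
  have hdrop : b e < b (d + e) := by
    have := (hk n).2
    rwa [he, ← hassoc, (hk (n + d)).1 e (by omega)] at this
  exact absurd (lexLE_iff.1 (hb d) e hagree) hdrop.not_ge

lemma exists_enclosing_of_not_isCut (hk : IsFirstDrop b x k) (hb : IsShiftMaximal b)
    (hcut : ¬ IsCut b x (n + k n + 1)) : ∃ m < n, n + k n < m + k m := by
  rw [hk.isCut_iff] at hcut
  push Not at hcut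
  obtain ⟨m, hm, hle⟩ := hcut
  refine ⟨m, not_le.1 fun hnm => ?_, by omega⟩
  have := hk.drop_le_drop_of_mem_Icc hb ⟨hnm, by omega⟩
  omega

lemma isCut_next (hk : IsFirstDrop b x k) (hb : IsShiftMaximal b) (hq : IsCut b x q) :
    IsCut b x (q + k q + 1) := by
  by_contra hcut
  obtain ⟨m, hm, hlt⟩ := hk.exists_enclosing_of_not_isCut hb hcut
  have := hk.isCut_iff.1 hq m hm
  omega

lemma exists_isCut_prev (hk : IsFirstDrop b x k) (hb : IsShiftMaximal b)
    (hlt : ∃ r < q, IsCut b x r) (hq : IsCut b x q) : ∃ r, IsCut b x r ∧ r + k r + 1 = q := by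
  obtain ⟨r, ⟨hrq, hr⟩, hmax⟩ := Int.exists_greatest_of_bdd (P := fun r => r < q ∧ IsCut b x r)
    ⟨q, fun _ hz => hz.1.le⟩ hlt
  refine ⟨r, hr, (Int.add_one_le_of_lt (hk.isCut_iff.1 hq r hrq)).antisymm ?_⟩
  by_contra! hnext
  have := hmax _ ⟨hnext, hk.isCut_next hb hr⟩
  omega

lemma getElem_fwdGen (hk : IsFirstDrop b x k) (n : ℤ) (l : ℕ)
    (hl : l < (fwdGen b (k n) (x (n + k n))).length) :
    (fwdGen b (k n) (x (n + k n)))[l] = x (n + l) := by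
  rw [length_fwdGen] at hl
  rcases Nat.lt_succ_iff_lt_or_eq.1 hl with h | rfl
  · simp [fwdGen, h, (hk n).1 l h]
  · simp [fwdGen]

lemma isParsing (hk : IsFirstDrop b x k) {p : ℤ → ℤ} (hp : ∀ j, p (j + 1) = p j + k (p j) + 1) :
    IsParsing (betaGens b) x p := by
  refine ⟨strictMono_int_of_lt_succ fun j => by rw [hp]; omega, fun j =>
    ⟨fwdGen b (k (p j)) (x (p j + k (p j))), ⟨_, _, (hk (p j)).2, rfl⟩, ?_,
      fun l hl => (hk.getElem_fwdGen _ l hl).symm⟩⟩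
  rw [hp, length_fwdGen, Nat.cast_succ, add_assoc]

/-- Passing from one cut point to the end of its generator permutes the cut points. -/
lemma mem_Xseq (hk : IsFirstDrop b x k) (hb : IsShiftMaximal b) (hcut : ∃ q, IsCut b x q)
    (hprev : ∀ q, IsCut b x q → ∃ r < q, IsCut b x r) : x ∈ Xseq (betaGens b) := by
  let next : {q // IsCut b x q} → {q // IsCut b x q} :=
    fun q => ⟨q + k q + 1, hk.isCut_next hb q.2⟩
  have hmono : StrictMono next := fun r q hrq => by
    have := hk.isCut_iff.1 q.2 r hrq
    change (r : ℤ) + k r + 1 < q + k q + 1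
    omega
  have hsurj : Function.Surjective next := fun ⟨q, hq⟩ => by
    obtain ⟨r, hr, hrq⟩ := hk.exists_isCut_prev hb (hprev q hq) hq
    exact ⟨⟨r, hr⟩, Subtype.ext hrq⟩
  let e : Equiv.Perm {q // IsCut b x q} := Equiv.ofBijective next ⟨hmono.injective, hsurj⟩
  obtain ⟨q₀, hq₀⟩ := hcut
  refine ⟨fun j => ((e ^ j) ⟨q₀, hq₀⟩ : {q // IsCut b x q}), hk.isParsing fun j => ?_⟩
  rw [add_comm j, zpow_one_add]
  rfl

lemma fwdGen_isInfix_ofFn (hk : IsFirstDrop b x k) (hmn : m < n) (hlt : n + k n < m + k m) :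
    fwdGen b (k n) (x (n + k n)) <:+: List.ofFn fun t : Fin (k m - 1) => b (1 + (t : ℕ)) := by
  obtain ⟨d, rfl⟩ := Int.exists_add_of_le (Int.add_one_le_of_lt hmn)
  refine List.infix_iff_getElem?.2 ⟨d, ?_, fun l hl => ?_⟩
  · rw [length_fwdGen, List.length_ofFn]
    omega
  rw [length_fwdGen] at hl
  rw [hk.getElem_fwdGen, List.getElem?_ofFn, dif_pos (by omega),
    ← (hk m).1 (1 + (l + d)) (by omega)]
  congr 2
  push_cast
  ring

lemma hasInfiniteChain (hk : IsFirstDrop b x k) (hb : IsShiftMaximal b)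
    (hcut : ∀ q, ¬ IsCut b x q) : HasInfiniteChain b := by
  choose outer houter_lt houter using
    fun n => hk.exists_enclosing_of_not_isCut hb (hcut (n + k n + 1))
  let s (i : ℕ) : ℤ := outer^[i + 1] 0
  have hs (i : ℕ) : s (i + 1) = outer (s i) := Function.iterate_succ_apply' _ _ _
  have hpos (n : ℤ) : 1 ≤ k (outer n) := by
    have := houter_lt n
    have := houter n
    omega
  refine ⟨fun i => k (s i), fun i => x (s i + k (s i)), fun i => ⟨?_, (hk (s i)).2⟩, fun i => ?_⟩
  · simpa only [s, Function.iterate_succ_apply'] using hpos _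
  · simp only [hs]
    exact hk.fwdGen_isInfix_ofFn (houter_lt _) (houter _)

end IsFirstDrop

end FirstDrop

section Recurrence

lemma measurable_shift (d : ℕ) : Measurable (shift d) :=
  measurable_pi_lambda _ fun _ => measurable_pi_apply _

lemma shift_iterate_apply {d : ℕ} (x : FullShift d) (m : ℕ) (n : ℤ) :
    (shift d)^[m] x n = x (n + m) := by
  induction m generalizing n with
  | zero => simp
  | succ m ih =>
    rw [Function.iterate_succ_apply', shift, ih]
    push_cast
    ring_nf

lemma ae_not_of_forall_iterate_not {α : Type*} [MeasurableSpace α] {f : α → α} {μ : Measure α}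
    (hf : Conservative f μ) {P : α → Prop} (hP : Measurable P)
    (h : ∀ x, P x → ∀ m ≠ 0, ¬ P (f^[m] x)) : ∀ᵐ x ∂μ, ¬ P x := by
  suffices hnull : μ {x | P x} = 0 from measure_eq_zero_iff_ae_notMem.1 hnull
  by_contra hμ
  obtain ⟨x, hx, m, hm, hmx⟩ :=
    hf.exists_mem_iterate_mem (measurableSet_setOfPred.2 hP).nullMeasurableSet hμ
  exact h x hx m hm hmx

variable {D : ℕ} {b : ℕ → Fin (D + 1)} {μ : Measure (FullShift (D + 1))}

lemma isCut_shift_iterate (x : FullShift (D + 1)) (m : ℕ) (q : ℤ) :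
    IsCut b ((shift (D + 1))^[m] x) q ↔ IsCut b x (q + m) := by
  simp only [IsCut, shift_iterate_apply]
  refine (Equiv.addRight (m : ℤ)).forall_congr fun n => ?_
  simp only [Equiv.coe_addRight, add_lt_add_iff_right, add_right_comm _ (m : ℤ)]

lemma measurable_isCut (b : ℕ → Fin (D + 1)) (q : ℤ) : Measurable fun x => IsCut b x q := by
  unfold IsCut
  fun_prop

lemma ae_forall_tail_ne (hμ : Conservative (shift (D + 1)) μ)
    (hb : ∀ p ≠ 0, ¬ Function.Periodic b p) :
    ∀ᵐ x ∂μ, ∀ n : ℤ, (fun t : ℕ => x (n + t)) ≠ b := by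
  refine ae_all_iff.2 fun n => ae_not_of_forall_iterate_not hμ ?_ fun x hx m hm hmx => ?_
  · exact measurableSet_setOfPred.1 (measurableSet_eq_fun (by fun_prop) measurable_const)
  · refine hb m hm fun t => ?_
    rw [← congrFun hmx t, ← congrFun hx (t + m), shift_iterate_apply, Nat.cast_add, add_assoc]

lemma ae_forall_isCut_exists_lt (hμ : Conservative (shift (D + 1)) μ) (b : ℕ → Fin (D + 1)) :
    ∀ᵐ x ∂μ, ∀ q, IsCut b x q → ∃ r < q, IsCut b x r := by
  have hfirst : ∀ᵐ x ∂μ, ∀ q, ¬ (IsCut b x q ∧ ∀ r < q, ¬ IsCut b x r) := by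
    refine ae_all_iff.2 fun q => ae_not_of_forall_iterate_not hμ ?_ ?_
    · have := measurable_isCut b
      fun_prop
    · rintro x ⟨hq, -⟩ m hm ⟨-, hmin⟩
      refine hmin (q - m) (by omega) ?_
      rwa [isCut_shift_iterate, sub_add_cancel]
  filter_upwards [hfirst] with x hx q hq
  by_contra! hmin
  exact hx q ⟨hq, hmin⟩

end Recurrence

theorem statement14_general {D : ℕ} {b : ℕ → Fin (D + 1)} (hb : IsShiftMaximal b)
    (hper : ∀ p ≠ 0, ¬ Function.Periodic b p) (hchain : ¬ HasInfiniteChain b)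
    {μ : Measure (FullShift (D + 1))} (hμ : Conservative (shift (D + 1)) μ) :
    μ (betaShift b \ Xseq (betaGens b)) = 0 := by
  refine ae_le_set.1 ?_
  filter_upwards [ae_forall_tail_ne hμ hper, ae_forall_isCut_exists_lt hμ b] with x htail hprev hx
  obtain ⟨k, hk⟩ := exists_isFirstDrop hx htail
  have hcut : ∃ q, IsCut b x q := by
    by_contra! hcut
    exact hchain (hk.hasInfiniteChain hb hcut)
  exact hk.mem_Xseq hb hcut hprev

/-- if moreover `G_β` contains no infinite chain of generators, then
every shift-invariant Borel probability measure on `X̂_β` gives zero measure to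
`X̂_β \ X̂_{β,seq}`. -/
theorem statement14 {D : ℕ} (hD : 1 ≤ D) (β : ℝ) (hβl : (D : ℝ) < β)
    (hβu : β < (D : ℝ) + 1) (b : ℕ → Fin (D + 1)) (hb : IsBetaExpansion β b)
    (hnp : ¬ EventuallyPeriodic b) (hchain : ¬ HasInfiniteChain b) :
    ∀ μ : Measure (FullShift (D + 1)), μ ∈ InvProb (betaShift b) →
      μ (betaShift b \ Xseq (betaGens b)) = 0 := by
  rintro μ ⟨_, hinv, -⟩
  have hβ : 1 < β := lt_of_le_of_lt (by exact_mod_cast hD) hβl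
  exact statement14_general (hb.isShiftMaximal hβ hβu)
    (fun p hp hper => hnp ⟨0, p, Nat.one_le_iff_ne_zero.2 hp, fun j _ => hper j⟩) hchain
    (MeasurePreserving.conservative ⟨measurable_shift _, hinv⟩)

end PaperStmt
end
end

section
/- Let X be a coded shift with unique representation G, let k ∈ ℕ₀ and let φ : X → ℝ be constant on centered (2k+1)-cylinders. Let E be the set of x ∈ X_seq such that, in the unique parsing of x into generators, a generator begins at index 0; for x ∈ E let r_E(x) be the length of that generator and φ_E(x) = Σ_{j=0}^{r_E(x)−1} φ(f^j x). Let h : E → Y = G^ℤ be the bijection sending x to its sequence of parsed generators (aligned so that the generator beginning at index 0 of x has index 0 in h(x)), and set φ̃ = φ_E ∘ h^{−1}. Then for every generator e ∈ G, sup(φ̃|_{[e]}) − inf(φ̃|_{[e]}) ≤ 2k (sup φ − inf φ), where [e] = {y ∈ Y : y_0 = e}; in particular φ̃ has finite oscillation. -/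
open Filter MeasureTheory Topology
open scoped BigOperators ENNReal

noncomputable section

namespace PaperStmt

/-!
Over a block of length `n`, shifting `x` by `i` places the window of radius `k` around the origin
inside the block as soon as `k ≤ i < n - k`. For those `i` the value of `φ` is read off the block
alone, so two sequences sharing the block contribute equal terms to the two Birkhoff sums. Only the
at most `2k` remaining indices matter, and each of them costs at most the oscillation of `φ`.
-/

theorem sum_range_le_two_mul_nsmul {M : Type*} [AddCommMonoid M] [Preorder M] [AddLeftMono M]
    {n k : ℕ} {u : ℕ → M} {C : M} (hC : 0 ≤ C) (hu : ∀ i < n, u i ≤ C)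
    (hu_middle : ∀ i, k ≤ i → i + k < n → u i ≤ 0) :
    ∑ i ∈ Finset.range n, u i ≤ (2 * k) • C := by
  set ends := {i ∈ Finset.range n | i < k ∨ n ≤ i + k} with hends
  have card_ends : ends.card ≤ 2 * k := by
    have hsub : ends ⊆ Finset.range k ∪ Finset.Ico (n - k) n := fun i hi => by
      simp only [hends, Finset.mem_filter, Finset.mem_union, Finset.mem_range,
        Finset.mem_Ico] at hi ⊢
      omega
    calc ends.card
        ≤ (Finset.range k).card + (Finset.Ico (n - k) n).card :=
          (Finset.card_le_card hsub).trans (Finset.card_union_le _ _)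
      _ ≤ 2 * k := by rw [Finset.card_range, Nat.card_Ico]; omega
  calc ∑ i ∈ Finset.range n, u i
      ≤ ∑ i ∈ ends, u i := by
        refine Finset.sum_le_sum_of_subset_of_nonpos' (Finset.filter_subset _ _) fun i hi hi' => ?_
        simp only [hends, Finset.mem_filter, hi, true_and, not_or, not_lt, not_le] at hi'
        exact hu_middle i hi'.1 hi'.2
    _ ≤ ends.card • C :=
        Finset.sum_le_card_nsmul _ _ _ fun i hi =>
          hu i (Finset.mem_range.mp (Finset.mem_of_mem_filter i hi))
    _ ≤ (2 * k) • C := nsmul_le_nsmul_left hC card_ends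

section ArbitraryAlphabet

variable {A β : Type*}

/-- The left shift on bi-infinite sequences over an arbitrary alphabet; over `Fin d` it is
definitionally `shift d`. -/
def leftShift (x : ℤ → A) : ℤ → A := fun i => x (i + 1)

theorem leftShift_iterate_apply (m : ℕ) (x : ℤ → A) (i : ℤ) :
    leftShift^[m] x i = x (i + m) := by
  induction m generalizing x with
  | zero => simp
  | succ m ih => rw [Function.iterate_succ_apply, ih, leftShift, Nat.cast_succ, add_assoc]

theorem continuous_leftShift [TopologicalSpace A] :
    Continuous (leftShift : (ℤ → A) → ℤ → A) :=
  continuous_pi fun i => continuous_apply (i + 1)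

/-- `φ` is constant on the centered `(2k+1)`-cylinders of `X`: on `X` its value is determined by
the coordinates in `[-k, k]`. Values of `φ` outside `X` are unconstrained. -/
def ConstantOnCenteredCylinders (X : Set (ℤ → A)) (k : ℕ) (φ : (ℤ → A) → β) : Prop :=
  ∀ x ∈ X, ∀ y ∈ X, (∀ i : ℤ, |i| ≤ (k : ℤ) → x i = y i) → φ x = φ y

namespace ConstantOnCenteredCylinders

variable {X : Set (ℤ → A)} {k : ℕ} {φ : (ℤ → A) → β}

theorem finite_image [Finite A] (hφ : ConstantOnCenteredCylinders X k φ) : (φ '' X).Finite := by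
  cases isEmpty_or_nonempty β
  · exact Set.toFinite _
  let window (x : X) : Set.Icc (-k : ℤ) k → A := fun i => x.1 i
  have hfactors : (fun x : X => φ x).FactorsThrough window := fun x y hxy =>
    hφ x x.2 y y.2 fun i hi => congrFun hxy ⟨i, abs_le.mp hi⟩
  obtain ⟨ψ, hψ⟩ := (Function.factorsThrough_iff _).mp hfactors
  rw [Set.image_eq_range, hψ]
  exact (Set.finite_range ψ).subset (Set.range_comp_subset_range window ψ)

theorem apply_leftShift_iterate_eq (hφ : ConstantOnCenteredCylinders X k φ)
    (hX : Set.MapsTo leftShift X X) {n : ℕ} {x x' : ℤ → A} (hx : x ∈ X) (hx' : x' ∈ X)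
    (hxx' : ∀ l : ℕ, l < n → x l = x' l) {i : ℕ} (hki : k ≤ i) (hin : i + k < n) :
    φ (leftShift^[i] x) = φ (leftShift^[i] x') := by
  refine hφ _ (hX.iterate i hx) _ (hX.iterate i hx') fun m hm => ?_
  obtain ⟨hm_lower, hm_upper⟩ := abs_le.mp hm
  obtain ⟨l, hl⟩ : ∃ l : ℕ, m + i = l := Int.eq_ofNat_of_zero_le (by omega)
  simp only [leftShift_iterate_apply, hl]
  exact hxx' l (by omega)

end ConstantOnCenteredCylinders

theorem statement18_general {E : Type*} [NormedAddCommGroup E] {X : Set (ℤ → A)}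
    (hX : Set.MapsTo leftShift X X) {k : ℕ} {φ : (ℤ → A) → E}
    (hφ : ConstantOnCenteredCylinders X k φ) (hbdd : Bornology.IsBounded (φ '' X))
    {n : ℕ} {x x' : ℤ → A} (hx : x ∈ X) (hx' : x' ∈ X)
    (hxx' : ∀ l : ℕ, l < n → x l = x' l) :
    dist (birkhoffSum leftShift φ n x) (birkhoffSum leftShift φ n x')
      ≤ 2 * k * Metric.diam (φ '' X) :=
  calc dist (birkhoffSum leftShift φ n x) (birkhoffSum leftShift φ n x')
      ≤ ∑ i ∈ Finset.range n, dist (φ (leftShift^[i] x)) (φ (leftShift^[i] x')) :=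
        dist_birkhoffSum_birkhoffSum_le _ _ _ _ _
    _ ≤ (2 * k) • Metric.diam (φ '' X) :=
        sum_range_le_two_mul_nsmul Metric.diam_nonneg
          (fun i _ => Metric.dist_le_diam_of_mem hbdd
            (Set.mem_image_of_mem φ (hX.iterate i hx)) (Set.mem_image_of_mem φ (hX.iterate i hx')))
          (fun _ hki hin =>
            (dist_eq_zero.mpr (hφ.apply_leftShift_iterate_eq hX hx hx' hxx' hki hin)).le)
    _ = 2 * k * Metric.diam (φ '' X) := by
        rw [nsmul_eq_mul, Nat.cast_mul, Nat.cast_ofNat]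

end ArbitraryAlphabet

section CodedShift

variable {d : ℕ} {𝒢 : Set (List (Fin d))}

theorem IsParsing.leftShift {x : FullShift d} {p : ℤ → ℤ} (hx : IsParsing 𝒢 x p) :
    IsParsing 𝒢 (leftShift x) (fun j => p j - 1) := by
  refine ⟨fun a b hab => sub_lt_sub_right (hx.1 hab) 1, fun j => ?_⟩
  obtain ⟨g, hg, hlength, hblock⟩ := hx.2 j
  refine ⟨g, hg, by simp only [hlength]; ring, fun l hl => ?_⟩
  rw [PaperStmt.leftShift, ← hblock l hl, add_right_comm, sub_add_cancel]

theorem mapsTo_leftShift_codedShift :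
    Set.MapsTo leftShift (codedShift 𝒢) (codedShift 𝒢) :=
  Set.MapsTo.closure (fun _ ⟨_, hp⟩ => ⟨_, hp.leftShift⟩) continuous_leftShift

end CodedShift

/-- oscillation bound for the induced potential. Let `𝒢` be a unique
representation of a coded shift and let `φ` be constant on centered `(2k+1)`-cylinders
of `X`. If `x, x'` are points of `X_seq` whose parsings have a cut at `0` followed by
the same generator `g`, then the induced Birkhoff sums over the block `g` (that is,
the values `φ̃` on the cylinder `[g]` of `Y = 𝒢^ℤ`) differ by at most
`2k (sup φ − inf φ)`; in particular `φ̃` has finite oscillation. -/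
theorem statement18 {d : ℕ} (hd : 2 ≤ d) (𝒢 : Set (List (Fin d)))
    (h𝒢 : ∀ g ∈ 𝒢, g ≠ []) (hU : UniqueRep 𝒢) (k : ℕ) (φ : FullShift d → ℝ)
    (hLC : ∀ x ∈ codedShift 𝒢, ∀ y ∈ codedShift 𝒢,
      (∀ i : ℤ, |i| ≤ (k : ℤ) → x i = y i) → φ x = φ y)
    (g : List (Fin d)) (hg : g ∈ 𝒢)
    (x x' : FullShift d) (p p' : ℤ → ℤ)
    (hx : IsParsing 𝒢 x p) (hx' : IsParsing 𝒢 x' p')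
    (hx0 : ∃ j : ℤ, p j = 0 ∧ p (j + 1) = g.length ∧
      ∀ (l : ℕ) (hl : l < g.length), x (l : ℕ) = g[l])
    (hx'0 : ∃ j : ℤ, p' j = 0 ∧ p' (j + 1) = g.length ∧
      ∀ (l : ℕ) (hl : l < g.length), x' (l : ℕ) = g[l]) :
    |birkhoff φ g.length x - birkhoff φ g.length x'|
      ≤ 2 * k * (sSup (φ '' codedShift 𝒢) - sInf (φ '' codedShift 𝒢)) := by
  obtain ⟨-, -, -, hxg⟩ := hx0
  obtain ⟨-, -, -, hx'g⟩ := hx'0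
  have hbdd : Bornology.IsBounded (φ '' codedShift 𝒢) :=
    (ConstantOnCenteredCylinders.finite_image hLC).isBounded
  rw [← Real.diam_eq hbdd]
  exact statement18_general mapsTo_leftShift_codedShift hLC hbdd (subset_closure ⟨p, hx⟩)
    (subset_closure ⟨p', hx'⟩) fun l hl => (hxg l hl).trans (hx'g l hl).symm

end PaperStmt
end
end
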